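/- Let (W,U,N) be a polarity, ε an order type over n, R a g-type relation with order type ε, and 1 ≤ i ≤ n with ε(i) = ∂. Let X_j ⊆ W be Galois-stable for every j ≠ i, and let 𝒳 be any family of Galois-stable subsets of W. Then ⋂_{Z ∈ 𝒳} g_R(X̄ⁱ_Z) = g_R(X̄ⁱ_{⋁𝒳}), where ⋁𝒳 = ((⋃𝒳)↑)↓. (Proposition 3.7, case g with ε(i) = ∂: g_R turns arbitrary joins in its i-th coordinate into meets.) -/

import Mathlib

universe u

/-- For `X ⊆ W`, `up N X = X↑ = {u ∈ U : N x u for all x ∈ X}`. -/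
def up {W U : Type u} (N : W → U → Prop) (X : Set W) : Set U := {u | ∀ x ∈ X, N x u}

/-- For `Y ⊆ U`, `dn N Y = Y↓ = {w ∈ W : N w u for all u ∈ Y}`. -/
def dn {W U : Type u} (N : W → U → Prop) (Y : Set U) : Set W := {w | ∀ u ∈ Y, N w u}

/-- A subset `X ⊆ W` is Galois-stable if `X = (X↑)↓`. -/
def stableW {W U : Type u} (N : W → U → Prop) (X : Set W) : Prop := X = dn N (up N X)

/-- A subset `Y ⊆ U` is Galois-stable if `Y = (Y↓)↑`. -/
def stableU {W U : Type u} (N : W → U → Prop) (Y : Set U) : Prop := Y = up N (dn N Y)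

/-- `coordType W U b` is `W` if `b = true` (order type 1) and `U` if `b = false` (order type ∂). -/
def coordType (W U : Type u) (b : Bool) : Type u := cond b W U

/-- `S⁰[C̄] = {a : (a, b̄) ∈ S for all b̄ ∈ C₁ × ⋯ × Cₙ}`. -/
def rel0 {A : Type u} {n : ℕ} {B : Fin n → Type u} (S : A → (∀ i, B i) → Prop)
    (C : ∀ i, Set (B i)) : Set A :=
  {a | ∀ b : ∀ i, B i, (∀ i, b i ∈ C i) → S a b}

/-- `Sⁱ[A', C̄ⁱ] = {x ∈ B i : (a, b̄ⁱ_x) ∈ S for all a ∈ A' and all b_j ∈ C_j (j ≠ i)}`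
(the `i`-th entry of `C` is ignored). -/
def reli {A : Type u} {n : ℕ} {B : Fin n → Type u} (S : A → (∀ i, B i) → Prop)
    (i : Fin n) (A' : Set A) (C : ∀ j, Set (B j)) : Set (B i) :=
  {x | ∀ a ∈ A', ∀ b : ∀ j, B j, (∀ j, j ≠ i → b j ∈ C j) → S a (Function.update b i x)}

/-- Galois-stability for a subset of `U^ε(i)` (as a subset of `U` or of `W` accordingly). -/
def coordStableG {W U : Type u} (N : W → U → Prop) :
    (b : Bool) → Set (coordType U W b) → Prop
  | true, Y => stableU N Y
  | false, X => stableW N X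

/-- `R` is a g-type relation with order type `ε`: `R ⊆ W × U^ε(1) × ⋯ × U^ε(n)` such that the
sets `R⁰[{ū}]` and `Rⁱ[{w}, {ū}ⁱ]` are all Galois-stable. -/
def isGType {W U : Type u} (N : W → U → Prop) {n : ℕ} (ε : Fin n → Bool)
    (R : W → (∀ i, coordType U W (ε i)) → Prop) : Prop :=
  (∀ v : ∀ i, coordType U W (ε i),
    stableW N (rel0 R fun i => ({v i} : Set (coordType U W (ε i))))) ∧
  (∀ (w : W) (v : ∀ i, coordType U W (ε i)) (i : Fin n),
    coordStableG N (ε i) (reli R i {w} fun j => ({v j} : Set (coordType U W (ε j)))))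

/-- The `i`-th entry of `X̄^ε`: `X_i↑` if `ε(i) = 1` and `X_i` if `ε(i) = ∂`. -/
def epsCoordG {W U : Type u} (N : W → U → Prop) :
    (b : Bool) → Set W → Set (coordType U W b)
  | true, X => up N X
  | false, X => X

/-- `g_R(X̄) := R⁰[X̄^ε]`. -/
def gR {W U : Type u} (N : W → U → Prop) {n : ℕ} (ε : Fin n → Bool)
    (R : W → (∀ i, coordType U W (ε i)) → Prop) (X : Fin n → Set W) : Set W :=
  rel0 R fun i => epsCoordG N (ε i) (X i)

theorem mem_reli_singleton {A : Type u} {n : ℕ} {B : Fin n → Type u}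
    (S : A → (∀ i, B i) → Prop) (i : Fin n) (a : A) (v : ∀ j, B j) (x : B i) :
    x ∈ reli S i {a} (fun j => ({v j} : Set (B j))) ↔ S a (Function.update v i x) := by
  constructor
  · intro h
    exact h a rfl v fun _ _ => rfl
  · rintro h _ rfl b hb
    have hbv : Function.update b i x = Function.update v i x := by
      funext j
      by_cases hj : j = i
      · subst hj
        simp
      · simpa [hj] using hb j hj
    rwa [hbv]

/-- `w ∈ g_R(X̄ⁱ_Z)` iff `Z` (in its `ε(i)`-version) is contained in every section
`Rⁱ[{w}, {v̄}ⁱ]` with `v_j` in the `j`-th entry of `X̄^ε` for `j ≠ i`. -/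
theorem mem_gR_update {W U : Type u} (N : W → U → Prop) {n : ℕ} (ε : Fin n → Bool)
    (R : W → (∀ i, coordType U W (ε i)) → Prop) (i : Fin n) (X : Fin n → Set W)
    (Z : Set W) (w : W) :
    w ∈ gR N ε R (Function.update X i Z) ↔
      ∀ v : ∀ j, coordType U W (ε j), (∀ j, j ≠ i → v j ∈ epsCoordG N (ε j) (X j)) →
        epsCoordG N (ε i) Z ⊆
          reli R i {w} (fun j => ({v j} : Set (coordType U W (ε j)))) := by
  constructor
  · intro h v hv x hx
    rw [mem_reli_singleton]
    refine h _ fun j => ?_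
    by_cases hj : j = i
    · subst hj
      simpa using hx
    · simpa [hj] using hv j hj
  · intro h v hv
    have hvi := h v (fun j hj => by simpa [hj] using hv j) (by simpa using hv i)
    rwa [mem_reli_singleton, Function.update_eq_self] at hvi

theorem epsCoordG_dn_up_sUnion_subset_iff {W U : Type u} (N : W → U → Prop) {b : Bool}
    (hb : b = false) {Y : Set (coordType U W b)} (hY : coordStableG N b Y)
    (𝒳 : Set (Set W)) :
    epsCoordG N b (dn N (up N (⋃₀ 𝒳))) ⊆ Y ↔ ∀ Z ∈ 𝒳, epsCoordG N b Z ⊆ Y := by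
  subst hb
  change Set W at Y
  change stableW N Y at hY
  change dn N (up N (⋃₀ 𝒳)) ⊆ Y ↔ ∀ Z ∈ 𝒳, Z ⊆ Y
  rw [← Set.sUnion_subset_iff]
  constructor
  · exact fun h x hx => h fun u hu => hu x hx
  · intro h x hx
    rw [hY]
    exact fun u hu => hx u fun y hy => hu y (h hy)

/-- Proposition 3.7, case `g` with `ε(i) = ∂`: `g_R` turns arbitrary joins in its `i`-th
coordinate into meets: `⋂_{Z ∈ 𝒳} g_R(X̄ⁱ_Z) = g_R(X̄ⁱ_{⋁𝒳})`, where `⋁𝒳 = ((⋃𝒳)↑)↓`. -/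
theorem gR_joins_to_meets {W U : Type u} (N : W → U → Prop) {n : ℕ} (ε : Fin n → Bool)
    (R : W → (∀ i, coordType U W (ε i)) → Prop) (hR : isGType N ε R)
    (i : Fin n) (hi : ε i = false)
    (X : Fin n → Set W) (hX : ∀ j, j ≠ i → stableW N (X j))
    (𝒳 : Set (Set W)) (h𝒳 : ∀ Z ∈ 𝒳, stableW N Z) :
    (⋂ Z ∈ 𝒳, gR N ε R (Function.update X i Z))
      = gR N ε R (Function.update X i (dn N (up N (⋃₀ 𝒳)))) := by
  ext w
  simp only [Set.mem_iInter, mem_gR_update]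
  constructor
  · exact fun h v hv => (epsCoordG_dn_up_sUnion_subset_iff N hi (hR.2 w v i) 𝒳).2
      fun Z hZ => h Z hZ v hv
  · exact fun h Z hZ v hv =>
      (epsCoordG_dn_up_sUnion_subset_iff N hi (hR.2 w v i) 𝒳).1 (h v hv) Z hZ
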